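/- If T is a locally finite infinite tree with a vertex of degree at least 3, and T ≅ T - x for some leaf x with the isomorphism applicable repeatedly (i.e. T ≅ T - W for every finite set W of leaves), then T has infinitely many leaves. -/

import Mathlib

open SimpleGraph Set

/-- A leaf of a graph: a vertex with exactly one neighbor (degree 1). -/
def IsLeaf {V : Type*} (G : SimpleGraph V) (x : V) : Prop :=
  (G.neighborSet x).encard = 1

/-- `v` is in the core `c(T)`: deleting `v` leaves at least two infinite components. -/
def InCore {V : Type*} (G : SimpleGraph V) (v : V) : Prop :=
  ∃ C D : (G.induce {u | u ≠ v}).ConnectedComponent,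
    C ≠ D ∧ C.supp.Infinite ∧ D.supp.Infinite

theorem SimpleGraph.Iso.encard_neighborSet {V W : Type*} {G : SimpleGraph V} {H : SimpleGraph W}
    (φ : G ≃g H) (v : V) : (H.neighborSet (φ v)).encard = (G.neighborSet v).encard :=
  (Set.encard_congr (φ.mapNeighborSet v)).symm

theorem SimpleGraph.Iso.isLeaf_iff {V W : Type*} {G : SimpleGraph V} {H : SimpleGraph W}
    (φ : G ≃g H) (v : V) : IsLeaf H (φ v) ↔ IsLeaf G v := by
  rw [IsLeaf, IsLeaf, φ.encard_neighborSet]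

theorem SimpleGraph.Iso.encard_setOf_isLeaf {V W : Type*} {G : SimpleGraph V} {H : SimpleGraph W}
    (φ : G ≃g H) : {x | IsLeaf H x}.encard = {x | IsLeaf G x}.encard :=
  (Set.encard_congr (φ.toEquiv.subtypeEquiv fun v => (φ.isLeaf_iff v).symm)).symm

theorem SimpleGraph.encard_neighborSet_induce {V : Type*} (G : SimpleGraph V) (s : Set V) (a : s) :
    ((G.induce s).neighborSet a).encard = (G.neighborSet a ∩ s).encard := by
  rw [← Subtype.val_injective.encard_image]
  congr 1
  ext b
  simp [and_comm]

theorem IsLeaf.eq_of_adj {V : Type*} {G : SimpleGraph V} {x y z : V} (hx : IsLeaf G x)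
    (hy : G.Adj x y) (hz : G.Adj x z) : z = y := by
  obtain ⟨w, hw⟩ := Set.encard_eq_one.1 hx
  have hy' : y ∈ G.neighborSet x := hy
  have hz' : z ∈ G.neighborSet x := hz
  rw [hw] at hy' hz'
  exact hz'.trans hy'.symm

/-- Deleting a leaf does not change the degree of a vertex other than the neighbor of the leaf. -/
theorem IsLeaf.encard_neighborSet_induce_of_ne {V : Type*} {G : SimpleGraph V} {x y : V}
    (hx : IsLeaf G x) (hy : G.Adj x y) (a : {v | v ∉ ({x} : Set V)}) (ha : (a : V) ≠ y) :
    ((G.induce {v | v ∉ ({x} : Set V)}).neighborSet a).encard = (G.neighborSet a).encard := by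
  rw [G.encard_neighborSet_induce, Set.inter_eq_left.2]
  rintro b hb rfl
  exact ha (hx.eq_of_adj hy (G.symm.symm _ _ hb))

/-- Deleting a leaf lowers the degree of its neighbor by one. -/
theorem encard_neighborSet_induce_add_one {V : Type*} {G : SimpleGraph V} {x : V}
    (a : {v | v ∉ ({x} : Set V)}) (ha : G.Adj x a) :
    ((G.induce {v | v ∉ ({x} : Set V)}).neighborSet a).encard + 1 = (G.neighborSet a).encard := by
  rw [G.encard_neighborSet_induce, ← Set.encard_sdiff_singleton_add_one (s := G.neighborSet a) (a := x) (G.symm.symm _ _ ha)]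
  rfl

/-- If deleting any single leaf gives an isomorphic graph and there are finitely many leaves, then
no path joins a leaf to a vertex of degree at least `3`. -/
theorem not_isPath_of_finite_isLeaf {V : Type*} {G : SimpleGraph V}
    (hfin : {x | IsLeaf G x}.Finite)
    (h : ∀ x, IsLeaf G x → Nonempty (G ≃g G.induce {v | v ∉ ({x} : Set V)}))
    (n : ℕ) (x v : V) (hx : IsLeaf G x) (hv : 3 ≤ (G.neighborSet v).encard)
    (p : G.Walk x v) (hp : p.IsPath) : p.length ≠ n := by
  induction n generalizing x v with
  | zero =>
    intro h0
    obtain rfl := Walk.eq_of_length_eq_zero h0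
    rw [hx] at hv
    norm_num at hv
  | succ n ih =>
    cases p with
    | nil => simp
    | @cons _ y _ hy q =>
      intro hn
      rw [Walk.length_cons, Nat.add_right_cancel_iff] at hn
      obtain ⟨hq, hxq⟩ := (Walk.cons_isPath_iff hy q).1 hp
      obtain ⟨φ⟩ := h x hx
      let y' : {v | v ∉ ({x} : Set V)} := ⟨y, hy.ne'⟩
      have hdeg := encard_neighborSet_induce_add_one y' hy
      by_cases hy3 : 3 ≤ (G.neighborSet y).encard
      · have hsub : Subtype.val '' {a | IsLeaf (G.induce {v | v ∉ ({x} : Set V)}) a} ⊆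
            {a | IsLeaf G a} \ {x} := by
          rintro _ ⟨a, ha, rfl⟩
          refine ⟨?_, a.2⟩
          by_cases hay : (a : V) = y
          · obtain rfl : a = y' := Subtype.ext hay
            rw [show _ = _ from ha] at hdeg
            rw [← show _ = (G.neighborSet y).encard from hdeg] at hy3
            norm_num at hy3
          · exact (hx.encard_neighborSet_induce_of_ne hy a hay).symm.trans ha
        have hle := Set.encard_le_encard hsub
        rw [Subtype.val_injective.encard_image, φ.encard_setOf_isLeaf] at hle
        exact (hfin.sdiff.encard_lt_encard (Set.sdiff_singleton_ssubset.2 hx)).not_ge hle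
      · have hvy : v ≠ y := by
          rintro rfl
          exact hy3 hv
        have hqs : ∀ u ∈ q.support, u ∈ {v | v ∉ ({x} : Set V)} := by
          rintro u hu rfl
          exact hxq hu
        by_cases hy1 : IsLeaf G y
        · exact ih y v hy1 hv q hq hn
        · have hy' : IsLeaf (G.induce {v | v ∉ ({x} : Set V)}) y' := by
            change _ = (1 : ℕ∞)
            rw [IsLeaf] at hy1
            change _ = (G.neighborSet y).encard at hdeg
            rw [← hdeg] at hy1 hy3
            generalize ((G.induce {v | v ∉ ({x} : Set V)}).neighborSet y').encard = m at *
            induction m using ENat.recTopCoe with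
            | top => simp at hy3
            | coe m =>
              norm_cast at *
              omega
          have hv' : 3 ≤ ((G.induce {v | v ∉ ({x} : Set V)}).neighborSet
              ⟨v, hqs v q.end_mem_support⟩).encard :=
            hv.trans_eq (hx.encard_neighborSet_induce_of_ne hy ⟨v, _⟩ hvy).symm
          refine ih (φ.symm y') (φ.symm ⟨v, hqs v q.end_mem_support⟩) ((φ.symm.isLeaf_iff _).2 hy')
            (hv'.trans_eq (φ.symm.encard_neighborSet _).symm)
            ((q.induce _ hqs).map φ.symm.toHom)
            (Walk.IsPath.map φ.symm.injective (.of_map (f := (Embedding.induce _).toHom) ?_)) ?_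
          · rwa [Walk.map_induce]
          · rw [Walk.length_map, ← hn, ← Walk.length_map (Embedding.induce _).toHom,
              Walk.map_induce]
            rfl

/-- a locally finite infinite tree with a vertex of degree ≥ 3
satisfying T ≅ T - W for all finite sets of leaves (in particular T ≅ T - x for
some leaf x) has infinitely many leaves. -/
theorem stmt_13 {V : Type*} (G : SimpleGraph V) (hT : G.IsTree)
    (hinf : Infinite V) (hlf : ∀ v, (G.neighborSet v).Finite)
    (hdeg : ∃ v, 3 ≤ (G.neighborSet v).encard)
    (hx : ∃ x, IsLeaf G x ∧ Nonempty (G ≃g G.induce {v | v ≠ x}))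
    (h : ∀ W : Set V, W.Finite → (∀ w ∈ W, IsLeaf G w) →
      Nonempty (G ≃g G.induce {v | v ∉ W})) :
    {x | IsLeaf G x}.Infinite := by
  intro hfin
  obtain ⟨x, hx, -⟩ := hx
  obtain ⟨v, hv⟩ := hdeg
  obtain ⟨p, hp⟩ := hT.connected.exists_isPath x v
  exact not_isPath_of_finite_isLeaf hfin
    (fun y hy => h {y} (Set.finite_singleton y) (by rintro _ rfl; exact hy))
    p.length x v hx hv p hp rfl
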